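/- Let n ≥ 4 be an integer, let 0 < κ₁, κ₂ < 1/2, and let ε > 0 be a sufficiently small constant. There exist a constant c₇ > 0 and Q₀ = Q₀(n, ε) such that for every integer Q > Q₀ and every rectangle E = I₁ × I₂ ⊆ [-1/2, 1/2]² with |I₁| = Q^{-κ₁}, |I₂| = Q^{-κ₂} and |x - y| > ε for all (x, y) ∈ E, the rectangle E contains at least c₇·Q^{n-κ₁-κ₂} algebraic integer points (α, β): that is, pairs of distinct real roots α ∈ I₁, β ∈ I₂ of a common monic polynomial P ∈ ℤ[t] of degree n, irreducible over ℚ, with all coefficients of absolute value at most Q. -/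

import Mathlib

open Polynomial

/-- `(α, β)` is an algebraic integer point of degree `n` and height at most `Q`:
`α` and `β` are distinct real roots of a common monic integer polynomial of degree `n`,
irreducible over `ℚ`, all of whose coefficients have absolute value at most `Q`. -/
def IsAlgIntPoint (n : ℕ) (Q : ℤ) (α β : ℝ) : Prop :=
  α ≠ β ∧ ∃ P : ℤ[X], P.Monic ∧ P.natDegree = n ∧
    Irreducible (P.map (algebraMap ℤ ℚ)) ∧
    (∀ j, |P.coeff j| ≤ Q) ∧
    Polynomial.aeval α P = 0 ∧ Polynomial.aeval β P = 0

/-!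
Consider monic polynomials `P = X ^ n + 2 (c + a X + A X² + b₀ X² + b₁ X³ + ⋯)` with `c` odd, hence
Eisenstein at `2`, where `A ≈ Q / 4` and the digits `bⱼ` run freely over `0 ≤ bⱼ < N`, with `N` a
small multiple of `Q`. Given the digits, the two coefficients `c` and `a` are fitted to prescribed
values at the centres `w₁` and `w₂` of `I₁` and `I₂`; integrality and the parity of `c` cost an
error of at most `3`, so the prescribed values are taken to be multiples of `7` to keep different
choices apart. As `P` is small at both centres, its slope near each of them is about that of a
quadratic with leading coefficient `2 A` and roots at distance at least `ε`, so `P` has a root in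
`I₁` and one in `I₂` as soon as the prescribed values are at most a small multiple of `Q |I₁|` and
`Q |I₂|`. This leaves about `Q ^ (n - 2) · Q |I₁| · Q |I₂|` polynomials, and as a monic irreducible
polynomial is determined by any of its roots, different polynomials give different points.
-/

section Eisenstein

lemma irreducible_X_pow_add_C_mul {R : Type*} [CommRing R] [IsDomain R] {p : R} (hp : Prime p)
    {n : ℕ} (hn : 0 < n) {G : R[X]} (hG : G.degree < n) (hG₀ : ¬ p ∣ G.coeff 0) :
    Irreducible (X ^ n + C p * G) := by
  have hdeg : (C p * G).degree < n := by rwa [degree_C_mul hp.ne_zero]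
  have hmonic : (X ^ n + C p * G).Monic := monic_X_pow_add hdeg
  have hnat : (X ^ n + C p * G).natDegree = n := by
    rw [natDegree_add_eq_left_of_degree_lt (by rwa [degree_X_pow]), natDegree_X_pow]
  have hprime : (Ideal.span {p}).IsPrime := (Ideal.span_singleton_prime hp.ne_zero).2 hp
  refine IsEisensteinAt.irreducible (𝓟 := Ideal.span {p}) ⟨?_, fun {i} hi ↦ ?_, ?_⟩ hprime
    hmonic.isPrimitive (hnat.symm ▸ hn)
  · rw [hmonic.leadingCoeff]
    exact hprime.one_notMem
  · rw [hnat] at hi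
    rw [coeff_add, coeff_X_pow, if_neg hi.ne, zero_add, coeff_C_mul]
    exact Ideal.mul_mem_right _ _ (Ideal.mem_span_singleton_self p)
  · rw [coeff_add, coeff_X_pow, if_neg hn.ne, zero_add, coeff_C_mul, Ideal.span_singleton_pow,
      Ideal.mem_span_singleton, sq, mul_dvd_mul_iff_left hp.ne_zero]
    exact hG₀

/-- The polynomial with coefficient sequence `c, a, T₀, T₁, …`. -/
noncomputable def prependCoeffs {R : Type*} [Semiring R] (c a : R) (T : R[X]) : R[X] :=
  X ^ 2 * T + C a * X + C c

section PrependCoeffs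

variable {R : Type*} [Semiring R] (c a : R) (T : R[X])

@[simp]
lemma coeff_zero_prependCoeffs : (prependCoeffs c a T).coeff 0 = c := by
  simp [prependCoeffs]

@[simp]
lemma coeff_one_prependCoeffs : (prependCoeffs c a T).coeff 1 = a := by
  simp [prependCoeffs, coeff_X_pow_mul', coeff_C_succ]

@[simp]
lemma coeff_add_two_prependCoeffs (j : ℕ) : (prependCoeffs c a T).coeff (j + 2) = T.coeff j := by
  simp [prependCoeffs, coeff_X_pow_mul, coeff_C_succ]

lemma degree_prependCoeffs_lt {k : ℕ} (hT : T.degree < k) :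
    (prependCoeffs c a T).degree < (k + 2 : ℕ) := by
  rw [degree_lt_iff_coeff_zero] at hT ⊢
  intro m hm
  obtain ⟨j, rfl⟩ : ∃ j, m = j + 2 := ⟨m - 2, by omega⟩
  rw [coeff_add_two_prependCoeffs, hT j (by omega)]

end PrependCoeffs

/-- The polynomial `X ^ (k + 2) + 2 (c + a X + X² T)`: for `deg T < k` it is monic of degree
`k + 2`, and it is Eisenstein at `2` when `c` is odd. The coefficients `c` and `a` are kept apart
from `T` because they are used to prescribe the values at two points. -/
noncomputable def evenTailPoly (k : ℕ) (c a : ℤ) (T : ℤ[X]) : ℤ[X] :=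
  X ^ (k + 2) + C 2 * prependCoeffs c a T

section EvenTailPoly

variable {k : ℕ} {c a c' a' : ℤ} {T T' : ℤ[X]}

lemma degree_two_mul_prependCoeffs_lt (hT : T.degree < k) :
    (C 2 * prependCoeffs c a T : ℤ[X]).degree < (k + 2 : ℕ) := by
  rw [degree_C_mul two_ne_zero]
  exact degree_prependCoeffs_lt c a T hT

lemma monic_evenTailPoly (hT : T.degree < k) : (evenTailPoly k c a T).Monic :=
  monic_X_pow_add (degree_two_mul_prependCoeffs_lt hT)

lemma natDegree_evenTailPoly (hT : T.degree < k) : (evenTailPoly k c a T).natDegree = k + 2 := by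
  rw [evenTailPoly, natDegree_add_eq_left_of_degree_lt, natDegree_X_pow]
  rw [degree_X_pow]
  exact degree_two_mul_prependCoeffs_lt hT

lemma irreducible_map_evenTailPoly (hT : T.degree < k) (hc : Odd c) :
    Irreducible ((evenTailPoly k c a T).map (algebraMap ℤ ℚ)) := by
  refine ((monic_evenTailPoly hT).irreducible_iff_irreducible_map_fraction_map (K := ℚ)).1 ?_
  refine irreducible_X_pow_add_C_mul Int.prime_two (by omega) (degree_prependCoeffs_lt _ _ _ hT) ?_
  rwa [coeff_zero_prependCoeffs, ← even_iff_two_dvd, Int.not_even_iff_odd]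

lemma evenTailPoly_inj_right (h : evenTailPoly k c a T = evenTailPoly k c' a' T') : T = T' := by
  ext j
  simpa [evenTailPoly] using congrArg (coeff · (j + 2)) h

lemma aeval_evenTailPoly {R : Type*} [CommRing R] (t : R) :
    aeval t (evenTailPoly k c a T) = t ^ (k + 2) + 2 * (t ^ 2 * aeval t T + a * t + c) := by
  simp only [evenTailPoly, prependCoeffs, map_add, map_mul, map_pow, aeval_X, aeval_C,
    algebraMap_int_eq, Int.coe_castRingHom, Int.cast_ofNat]

lemma abs_coeff_evenTailPoly_le {Q : ℤ} (hT : T.degree < k) (hQ : 1 ≤ Q) (hc : |2 * c| ≤ Q)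
    (ha : |2 * a| ≤ Q) (hTQ : ∀ j, |2 * T.coeff j| ≤ Q) (i : ℕ) :
    |(evenTailPoly k c a T).coeff i| ≤ Q := by
  rcases eq_or_ne i (k + 2) with rfl | hi
  · rwa [← natDegree_evenTailPoly hT, (monic_evenTailPoly hT).coeff_natDegree, abs_one]
  rw [evenTailPoly, coeff_add, coeff_X_pow, if_neg hi, zero_add, coeff_C_mul]
  match i with
  | 0 => rwa [coeff_zero_prependCoeffs]
  | 1 => rwa [coeff_one_prependCoeffs]
  | j + 2 => rw [coeff_add_two_prependCoeffs]; exact hTQ j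

end EvenTailPoly

end Eisenstein

section Counting

lemma eq_of_irreducible_map_of_common_root {K : Type*} [Field K] [CharZero K] {P P' : ℤ[X]}
    (hP : P.Monic) (hP' : P'.Monic) (hirr : Irreducible (P.map (algebraMap ℤ ℚ)))
    (hirr' : Irreducible (P'.map (algebraMap ℤ ℚ))) {α : K} (h : aeval α P = 0)
    (h' : aeval α P' = 0) : P = P' := by
  refine map_injective _ (algebraMap ℤ ℚ).injective_int ?_
  rw [minpoly.eq_of_irreducible_of_monic hirr ((aeval_map_algebraMap ℚ α P).trans h) (hP.map _),
    minpoly.eq_of_irreducible_of_monic hirr' ((aeval_map_algebraMap ℚ α P').trans h') (hP'.map _)]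

lemma exists_finset_isAlgIntPoint_card_eq {ι : Type*} [Fintype ι] {P : ι → ℤ[X]}
    (hinj : Function.Injective P) {n : ℕ} {Q : ℤ} {s t : Set ℝ} (hst : Disjoint s t)
    (hmonic : ∀ i, (P i).Monic) (hdeg : ∀ i, (P i).natDegree = n)
    (hirr : ∀ i, Irreducible ((P i).map (algebraMap ℤ ℚ))) (hQ : ∀ i j, |(P i).coeff j| ≤ Q)
    (hs : ∀ i, ∃ α ∈ s, aeval α (P i) = 0) (ht : ∀ i, ∃ β ∈ t, aeval β (P i) = 0) :
    ∃ S : Finset (ℝ × ℝ), (∀ q ∈ S, q.1 ∈ s ∧ q.2 ∈ t ∧ IsAlgIntPoint n Q q.1 q.2) ∧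
      S.card = Fintype.card ι := by
  choose α hαs hα using hs
  choose β hβt hβ using ht
  have hαβ : Function.Injective fun i ↦ (α i, β i) := fun i j hij ↦ by
    have hαij : α i = α j := congrArg Prod.fst hij
    exact hinj (eq_of_irreducible_map_of_common_root (hmonic i) (hmonic j) (hirr i) (hirr j)
      (hα i) (hαij ▸ hα j))
  refine ⟨Finset.univ.map ⟨_, hαβ⟩, fun q hq ↦ ?_, by simp⟩
  obtain ⟨i, -, rfl⟩ := Finset.mem_map.1 hq
  exact ⟨hαs i, hβt i, hst.ne_of_mem (hαs i) (hβt i), P i, hmonic i, hdeg i, hirr i, hQ i,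
    hα i, hβ i⟩

end Counting

section RealAnalysis

lemma exists_eq_zero_of_le_deriv {f : ℝ → ℝ} {m w r : ℝ} (hr : 0 ≤ r)
    (hf : ContinuousOn f (Set.Icc (w - r) (w + r)))
    (hf' : DifferentiableOn ℝ f (Set.Ioo (w - r) (w + r)))
    (hm : ∀ t ∈ Set.Ioo (w - r) (w + r), m ≤ deriv f t) (hw : |f w| ≤ m * r) :
    ∃ t ∈ Set.Icc (w - r) (w + r), f t = 0 := by
  have hmean := (convex_Icc (w - r) (w + r)).mul_sub_le_image_sub_of_le_deriv hf
    (by rwa [interior_Icc]) (by rwa [interior_Icc])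
  have hleft := hmean (w - r) (by simpa using by linarith) w ⟨by linarith, by linarith⟩
    (by linarith)
  have hright := hmean w ⟨by linarith, by linarith⟩ (w + r) (by simpa using by linarith)
    (by linarith)
  obtain ⟨hlow, hhigh⟩ := abs_le.1 hw
  exact intermediate_value_Icc (by linarith) hf ⟨by linarith, by linarith⟩

lemma abs_eval_le_of_abs_coeff_le {R : Type*} [CommRing R] [LinearOrder R]
    [IsStrictOrderedRing R] {p : R[X]} {n : ℕ} {N t : R} (hn : p.natDegree < n)
    (hN : ∀ i, |p.coeff i| ≤ N) (ht : |t| ≤ 1) : |p.eval t| ≤ n * N := by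
  rw [eval_eq_sum_range' hn]
  calc |∑ i ∈ Finset.range n, p.coeff i * t ^ i|
      ≤ ∑ i ∈ Finset.range n, |p.coeff i * t ^ i| := Finset.abs_sum_le_sum_abs _ _
    _ ≤ ∑ _i ∈ Finset.range n, N := Finset.sum_le_sum fun i _ ↦ by
        rw [abs_mul, abs_pow]
        exact (mul_le_of_le_one_right (abs_nonneg _) (pow_le_one₀ (abs_nonneg _) ht)).trans (hN i)
    _ = n * N := by rw [Finset.sum_const, Finset.card_range, nsmul_eq_mul]

lemma abs_coeff_derivative_le {R : Type*} [CommRing R] [LinearOrder R] [IsStrictOrderedRing R]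
    {p : R[X]} {n : ℕ} {N : R} (hn : p.natDegree < n) (hN : ∀ i, |p.coeff i| ≤ N) (i : ℕ) :
    |p.derivative.coeff i| ≤ n * N := by
  have hN₀ : 0 ≤ N := (abs_nonneg _).trans (hN 0)
  rw [coeff_derivative]
  rcases lt_or_ge (i + 1) n with hi | hi
  · have hi' : ((i + 1 : ℕ) : R) ≤ n := by exact_mod_cast hi.le
    rw [← Nat.cast_succ, abs_mul, Nat.abs_cast, mul_comm]
    exact mul_le_mul hi' (hN _) (abs_nonneg _) n.cast_nonneg
  · rw [coeff_eq_zero_of_natDegree_lt (hn.trans_le hi), zero_mul, abs_zero]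
    positivity

lemma abs_eval_derivative_le_of_abs_coeff_le {R : Type*} [CommRing R] [LinearOrder R]
    [IsStrictOrderedRing R] {p : R[X]} {n : ℕ} {N t : R} (hn : p.natDegree < n)
    (hN : ∀ i, |p.coeff i| ≤ N) (ht : |t| ≤ 1) : |p.derivative.eval t| ≤ n ^ 2 * N := by
  rw [sq, mul_assoc]
  exact abs_eval_le_of_abs_coeff_le ((natDegree_derivative_le p).trans_lt (by omega))
    (abs_coeff_derivative_le hn hN) ht

lemma exists_int_affine_near {w₁ w₂ : ℝ} (hne : w₁ ≠ w₂) (hw₁ : |w₁| ≤ 1) (hw₂ : |w₂| ≤ 1)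
    (u v : ℝ) : ∃ a c : ℤ, Odd c ∧ |2 * a * w₁ + 2 * c - u| ≤ 3 ∧ |2 * a * w₂ + 2 * c - v| ≤ 3 := by
  have hsub : w₁ - w₂ ≠ 0 := sub_ne_zero.2 hne
  obtain ⟨x, y, hu, hv⟩ : ∃ x y : ℝ, u = x * w₁ + y ∧ v = x * w₂ + y :=
    ⟨(u - v) / (w₁ - w₂), u - (u - v) / (w₁ - w₂) * w₁, by ring, by field_simp; ring⟩
  set m := round (x / 2)
  set l := round ((y - 2) / 4)
  have hm : |x / 2 - m| ≤ 1 / 2 := abs_sub_round (x / 2)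
  have hl : |(y - 2) / 4 - l| ≤ 1 / 2 := abs_sub_round ((y - 2) / 4)
  have error_le {w : ℝ} (hw : |w| ≤ 1) :
      |2 * m * w + 2 * (2 * l + 1 : ℤ) - (x * w + y)| ≤ 3 := by
    calc |2 * m * w + 2 * (2 * l + 1 : ℤ) - (x * w + y)|
        = |-2 * (x / 2 - m) * w + -4 * ((y - 2) / 4 - l)| := by
          push_cast
          congr 1
          ring
      _ ≤ 2 * |x / 2 - m| * |w| + 4 * |(y - 2) / 4 - l| := by
          refine (abs_add_le _ _).trans_eq ?_
          simp only [abs_mul, abs_neg, Nat.abs_ofNat]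
      _ ≤ 2 * (1 / 2) * 1 + 4 * (1 / 2) := by gcongr
      _ = 3 := by norm_num
  exact ⟨m, 2 * l + 1, ⟨l, rfl⟩, hu ▸ error_le hw₁, hv ▸ error_le hw₂⟩

lemma natCast_eq_of_abs_sub_le {x : ℝ} {i j : ℕ} (hi : |x - 7 * i| ≤ 3) (hj : |x - 7 * j| ≤ 3) :
    i = j := by
  rw [abs_le] at hi hj
  have hij : 7 * i < 7 * j + 7 := by exact_mod_cast (by linarith : (7 * i : ℝ) < 7 * j + 7)
  have hji : 7 * j < 7 * i + 7 := by exact_mod_cast (by linarith : (7 * j : ℝ) < 7 * i + 7)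
  omega

end RealAnalysis

section PerturbedQuadratic

/-- `R` and its derivative are bounded by `τ` on `[-1, 1]`: the sense in which a perturbation of a
quadratic polynomial is small. -/
def IsC1BoundedBy (R : ℝ[X]) (τ : ℝ) : Prop :=
  ∀ t, |t| ≤ 1 → |R.eval t| ≤ τ ∧ |R.derivative.eval t| ≤ τ

lemma isC1BoundedBy_of_abs_coeff_le {R : ℝ[X]} {n : ℕ} {N τ : ℝ} (hn : R.natDegree < n)
    (hN : ∀ i, |R.coeff i| ≤ N) (hτ : n ^ 2 * N ≤ τ) : IsC1BoundedBy R τ := fun t ht ↦ by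
  have hN₀ : 0 ≤ N := (abs_nonneg _).trans (hN 0)
  have hn_sq : (n : ℝ) ≤ n ^ 2 := by exact_mod_cast Nat.le_self_pow two_ne_zero n
  exact ⟨(abs_eval_le_of_abs_coeff_le hn hN ht).trans (hτ.trans' (by gcongr)),
    (abs_eval_derivative_le_of_abs_coeff_le hn hN ht).trans hτ⟩

/-- The quadratic polynomial `A X² + B X + D` with a perturbation `R` added. -/
noncomputable def perturbedQuadratic (A B D : ℝ) (R : ℝ[X]) : ℝ[X] :=
  C A * X ^ 2 + C B * X + C D + R

variable {A B D w₁ w₂ r t ε τ : ℝ} {R : ℝ[X]}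

lemma eval_perturbedQuadratic :
    (perturbedQuadratic A B D R).eval t = A * t ^ 2 + B * t + D + R.eval t := by
  simp [perturbedQuadratic]

lemma eval_derivative_perturbedQuadratic :
    (perturbedQuadratic A B D R).derivative.eval t = 2 * A * t + B + R.derivative.eval t := by
  simp [perturbedQuadratic]
  ring

-- `B + A (w₁ + w₂)` is the slope of the secant of `A X² + B X + D` through `w₁` and `w₂`.
lemma abs_secantSlope_mul_sub_le (hw₁ : |w₁| ≤ 1) (hw₂ : |w₂| ≤ 1) (hR : IsC1BoundedBy R τ)
    (h₁ : |(perturbedQuadratic A B D R).eval w₁| ≤ τ)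
    (h₂ : |(perturbedQuadratic A B D R).eval w₂| ≤ τ) :
    |(B + A * (w₁ + w₂)) * (w₁ - w₂)| ≤ 4 * τ := by
  have hR₁ := (hR w₁ hw₁).1
  have hR₂ := (hR w₂ hw₂).1
  rw [eval_perturbedQuadratic] at h₁ h₂
  rw [abs_le] at *
  constructor <;> linarith

lemma abs_secantSlope_le (hA : 0 ≤ A) (hε : 0 < ε) (hε' : ε ≤ 1) (hw₁ : |w₁| ≤ 1) (hw₂ : |w₂| ≤ 1)
    (hw : ε ≤ |w₁ - w₂|) (hR : IsC1BoundedBy R (ε ^ 2 * A / 20))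
    (h₁ : |(perturbedQuadratic A B D R).eval w₁| ≤ ε ^ 2 * A / 20)
    (h₂ : |(perturbedQuadratic A B D R).eval w₂| ≤ ε ^ 2 * A / 20) :
    |B + A * (w₁ + w₂)| ≤ A / 5 := by
  refine le_of_mul_le_mul_right ?_ hε
  calc |B + A * (w₁ + w₂)| * ε ≤ |B + A * (w₁ + w₂)| * |w₁ - w₂| := by gcongr
    _ = |(B + A * (w₁ + w₂)) * (w₁ - w₂)| := (abs_mul _ _).symm
    _ ≤ 4 * (ε ^ 2 * A / 20) := abs_secantSlope_mul_sub_le hw₁ hw₂ hR h₁ h₂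
    _ = ε * (A / 5 * ε) := by ring
    _ ≤ A / 5 * ε := mul_le_of_le_one_left (by positivity) hε'

lemma abs_linearCoeff_le_of_secantSlope_le (hA : 0 ≤ A) (hw₁ : |w₁| ≤ 1 / 2) (hw₂ : |w₂| ≤ 1 / 2)
    (hslope : |B + A * (w₁ + w₂)| ≤ A / 5) : |B| ≤ 2 * A := by
  have hsum : |A * (w₁ + w₂)| ≤ A := by
    rw [abs_mul, abs_of_nonneg hA]
    exact mul_le_of_le_one_right hA ((abs_add_le _ _).trans (by linarith))
  rw [abs_le] at *
  constructor <;> linarith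

lemma abs_constCoeff_le_of_secantSlope_le (hA : 0 ≤ A) (hw₁ : |w₁| ≤ 1) (hw₂ : |w₂| ≤ 1)
    (hslope : |B + A * (w₁ + w₂)| ≤ A / 5) (hτ : τ ≤ A / 20) (hR : IsC1BoundedBy R τ)
    (h₁ : |(perturbedQuadratic A B D R).eval w₁| ≤ τ) : |D| ≤ 2 * A := by
  have hslope₁ : |(B + A * (w₁ + w₂)) * w₁| ≤ A / 5 := by
    rw [abs_mul]
    exact (mul_le_of_le_one_right (abs_nonneg _) hw₁).trans hslope
  have hprod : |A * (w₁ * w₂)| ≤ A := by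
    rw [abs_mul, abs_of_nonneg hA, abs_mul]
    exact mul_le_of_le_one_right hA (mul_le_one₀ hw₁ (abs_nonneg _) hw₂)
  have hR₁ := (hR w₁ hw₁).1
  rw [eval_perturbedQuadratic] at h₁
  rw [abs_le] at *
  constructor <;> linarith

lemma le_sub_mul_eval_derivative_perturbedQuadratic (hA : 0 ≤ A) (hε : 0 ≤ ε) (hw₁ : |w₁| ≤ 1 / 2)
    (hw₂ : |w₂| ≤ 1 / 2) (hw : ε ≤ |w₁ - w₂|) (hR : IsC1BoundedBy R (ε ^ 2 * A / 20))
    (h₁ : |(perturbedQuadratic A B D R).eval w₁| ≤ ε ^ 2 * A / 20)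
    (h₂ : |(perturbedQuadratic A B D R).eval w₂| ≤ ε ^ 2 * A / 20)
    (ht : |t| ≤ 1) (htw : |t - w₁| ≤ ε ^ 2 / 5) :
    ε ^ 2 * A / 4 ≤ (w₁ - w₂) * (perturbedQuadratic A B D R).derivative.eval t := by
  have hd : |w₁ - w₂| ≤ 1 := (abs_sub _ _).trans (by linarith)
  have hd_sq : ε ^ 2 ≤ (w₁ - w₂) ^ 2 := by
    rw [← sq_abs (w₁ - w₂)]
    gcongr
  have hshift : |(t - w₁) * (w₁ - w₂)| ≤ ε ^ 2 / 5 := by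
    rw [abs_mul]
    exact (mul_le_of_le_one_right (abs_nonneg _) hd).trans htw
  have hR' : |(w₁ - w₂) * R.derivative.eval t| ≤ ε ^ 2 * A / 20 := by
    rw [abs_mul]
    exact (mul_le_of_le_one_left (abs_nonneg _) hd).trans (hR t ht).2
  have hslope := abs_secantSlope_mul_sub_le (by linarith) (by linarith) hR h₁ h₂
  calc ε ^ 2 * A / 4 ≤ A * (3 / 5 * ε ^ 2) - 5 * (ε ^ 2 * A / 20) := by
        have : 0 ≤ ε ^ 2 * A := by positivity
        linarith
    _ ≤ A * ((w₁ - w₂) ^ 2 + 2 * ((t - w₁) * (w₁ - w₂)))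
          + (B + A * (w₁ + w₂)) * (w₁ - w₂) + (w₁ - w₂) * R.derivative.eval t := by
        have hmain : A * (3 / 5 * ε ^ 2) ≤ A * ((w₁ - w₂) ^ 2 + 2 * ((t - w₁) * (w₁ - w₂))) :=
          mul_le_mul_of_nonneg_left (by linarith [(abs_le.1 hshift).1]) hA
        linarith [(abs_le.1 hslope).1, (abs_le.1 hR').1]
    _ = (w₁ - w₂) * (perturbedQuadratic A B D R).derivative.eval t := by
        rw [eval_derivative_perturbedQuadratic]
        ring

lemma slope_mul_radius_le (hA : 0 ≤ A) (hε : 0 ≤ ε) (hε' : ε ≤ 1) (hr : r ≤ ε ^ 2 / 5) :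
    ε ^ 2 * A / 4 * r ≤ ε ^ 2 * A / 20 := by
  have hr' : r ≤ 1 / 5 := by linarith [pow_le_one₀ (n := 2) hε hε']
  calc ε ^ 2 * A / 4 * r ≤ ε ^ 2 * A / 4 * (1 / 5) := by gcongr
    _ = ε ^ 2 * A / 20 := by ring

lemma exists_root_perturbedQuadratic (hA : 0 ≤ A) (hε : 0 < ε) (hε' : ε ≤ 1)
    (hw₁ : |w₁| ≤ 1 / 2) (hw₂ : |w₂| ≤ 1 / 2) (hw : ε ≤ |w₁ - w₂|)
    (hR : IsC1BoundedBy R (ε ^ 2 * A / 20)) (hr : 0 ≤ r) (hr' : r ≤ ε ^ 2 / 5)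
    (h₁ : |(perturbedQuadratic A B D R).eval w₁| ≤ ε ^ 2 * A / 4 * r)
    (h₂ : |(perturbedQuadratic A B D R).eval w₂| ≤ ε ^ 2 * A / 20) :
    ∃ α ∈ Set.Icc (w₁ - r) (w₁ + r), (perturbedQuadratic A B D R).eval α = 0 := by
  set f := perturbedQuadratic A B D R
  have hε_sq : ε ^ 2 ≤ 1 := pow_le_one₀ hε.le hε'
  have h₁' : |f.eval w₁| ≤ ε ^ 2 * A / 20 := h₁.trans (slope_mul_radius_le hA hε.le hε' hr')
  have hd : |w₁ - w₂| ≤ 1 := (abs_sub _ _).trans (by linarith)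
  have hd₀ : w₁ - w₂ ≠ 0 := abs_pos.1 (hε.trans_le hw)
  -- multiplying by `w₁ - w₂` makes the derivative near `w₁` positive
  obtain ⟨α, hα, hα₀⟩ := exists_eq_zero_of_le_deriv (f := fun t ↦ (w₁ - w₂) * f.eval t)
    (m := ε ^ 2 * A / 4) (w := w₁) hr (by fun_prop) (by fun_prop)
    (fun t ⟨hlow, hhigh⟩ ↦ by
      have htw : |t - w₁| ≤ r := abs_le.2 ⟨by linarith, by linarith⟩
      have ht : |t| ≤ 1 := by
        rw [abs_le] at htw hw₁ ⊢
        constructor <;> linarith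
      rw [deriv_const_mul _ f.differentiableAt, f.deriv]
      exact le_sub_mul_eval_derivative_perturbedQuadratic hA hε.le hw₁ hw₂ hw hR h₁' h₂ ht
        (htw.trans hr'))
    (by
      rw [abs_mul]
      exact (mul_le_of_le_one_left (abs_nonneg _) hd).trans h₁)
  exact ⟨α, hα, (mul_eq_zero.1 hα₀).resolve_left hd₀⟩

end PerturbedQuadratic

section Construction

lemma aeval_evenTailPoly_C_add (k : ℕ) (A c a : ℤ) (T : ℤ[X]) (t : ℝ) :
    aeval t (evenTailPoly k c a (C A + T)) =
      (perturbedQuadratic (2 * A) (2 * a) (2 * c)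
        ((evenTailPoly k 0 0 T).map (algebraMap ℤ ℝ))).eval t := by
  rw [eval_perturbedQuadratic, eval_map_algebraMap]
  simp only [aeval_evenTailPoly, map_add, aeval_C, algebraMap_int_eq, Int.coe_castRingHom,
    Int.cast_zero]
  ring

lemma isC1BoundedBy_map_evenTailPoly {k N : ℕ} {T : ℤ[X]} {τ : ℝ} (hT : T.degree < k) (hN : 0 < N)
    (hTN : ∀ j, |T.coeff j| ≤ N) (hτ : ((k + 3 : ℕ) : ℝ) ^ 2 * (2 * N) ≤ τ) :
    IsC1BoundedBy ((evenTailPoly k 0 0 T).map (algebraMap ℤ ℝ)) τ := by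
  refine isC1BoundedBy_of_abs_coeff_le (n := k + 3) ?_ (fun i ↦ ?_) hτ
  · exact natDegree_map_le.trans_lt ((natDegree_evenTailPoly hT).trans_lt (by omega))
  · have := abs_coeff_evenTailPoly_le (c := 0) (a := 0) (Q := 2 * N) hT (by omega) (by simp)
      (by simp) (fun j ↦ by rw [abs_mul, abs_two]; linarith [hTN j]) i
    rw [coeff_map, eq_intCast]
    exact_mod_cast this

variable {k : ℕ} {A : ℤ} {T : ℤ[X]} {ε w₁ w₂ r₁ r₂ : ℝ}

lemma exists_evenTailPoly_near (k : ℕ) (T : ℤ[X]) (hne : w₁ ≠ w₂) (hw₁ : |w₁| ≤ 1)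
    (hw₂ : |w₂| ≤ 1) (u v : ℝ) :
    ∃ c a : ℤ, Odd c ∧ |aeval w₁ (evenTailPoly k c a T) - u| ≤ 3 ∧
      |aeval w₂ (evenTailPoly k c a T) - v| ≤ 3 := by
  obtain ⟨a, c, hc, hau, hav⟩ := exists_int_affine_near hne hw₁ hw₂
    (u - aeval w₁ (evenTailPoly k 0 0 T)) (v - aeval w₂ (evenTailPoly k 0 0 T))
  have haeval (t : ℝ) : aeval t (evenTailPoly k c a T) =
      2 * a * t + 2 * c + aeval t (evenTailPoly k 0 0 T) := by
    simp only [aeval_evenTailPoly, Int.cast_zero]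
    ring
  rw [← sub_add, sub_add_eq_add_sub] at hau hav
  exact ⟨c, a, hc, by rwa [haeval], by rwa [haeval]⟩

lemma abs_two_mul_coeff_le_of_abs_aeval_le {c a : ℤ} (hA : 0 ≤ A) (hε : 0 < ε) (hε' : ε ≤ 1)
    (hw₁ : |w₁| ≤ 1 / 2) (hw₂ : |w₂| ≤ 1 / 2) (hw : ε ≤ |w₁ - w₂|)
    (hT : IsC1BoundedBy ((evenTailPoly k 0 0 T).map (algebraMap ℤ ℝ)) (ε ^ 2 * (2 * A) / 20))
    (h₁ : |aeval w₁ (evenTailPoly k c a (C A + T))| ≤ ε ^ 2 * (2 * A) / 20)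
    (h₂ : |aeval w₂ (evenTailPoly k c a (C A + T))| ≤ ε ^ 2 * (2 * A) / 20) :
    |2 * c| ≤ 4 * A ∧ |2 * a| ≤ 4 * A := by
  rw [aeval_evenTailPoly_C_add] at h₁ h₂
  have hA' : (0 : ℝ) ≤ 2 * A := by exact_mod_cast mul_nonneg zero_le_two hA
  have hw₁' : |w₁| ≤ 1 := by linarith
  have hw₂' : |w₂| ≤ 1 := by linarith
  have hτ : ε ^ 2 * (2 * A) / 20 ≤ 2 * A / 20 :=
    div_le_div_of_nonneg_right
      (mul_le_of_le_one_left hA' (pow_le_one₀ hε.le hε')) (by norm_num)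
  have hslope := abs_secantSlope_le hA' hε hε' hw₁' hw₂' hw hT h₁ h₂
  have hc := abs_constCoeff_le_of_secantSlope_le hA' hw₁' hw₂' hslope hτ hT h₁
  have ha := abs_linearCoeff_le_of_secantSlope_le hA' hw₁ hw₂ hslope
  have hA_assoc : 2 * (2 * A) = 4 * A := by ring
  exact ⟨hA_assoc ▸ by exact_mod_cast hc, hA_assoc ▸ by exact_mod_cast ha⟩

lemma exists_evenTailPoly_near_and_exists_roots {u v : ℝ} (hA : 0 ≤ A) (hε : 0 < ε) (hε' : ε ≤ 1)
    (hw₁ : |w₁| ≤ 1 / 2) (hw₂ : |w₂| ≤ 1 / 2) (hw : ε ≤ |w₁ - w₂|)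
    (hr₁ : 0 ≤ r₁) (hr₁' : r₁ ≤ ε ^ 2 / 5) (hr₂ : 0 ≤ r₂) (hr₂' : r₂ ≤ ε ^ 2 / 5)
    (hT : IsC1BoundedBy ((evenTailPoly k 0 0 T).map (algebraMap ℤ ℝ)) (ε ^ 2 * (2 * A) / 20))
    (hu : |u| + 3 ≤ ε ^ 2 * (2 * A) / 4 * r₁) (hv : |v| + 3 ≤ ε ^ 2 * (2 * A) / 4 * r₂) :
    ∃ c a : ℤ, Odd c ∧ |2 * c| ≤ 4 * A ∧ |2 * a| ≤ 4 * A ∧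
      |aeval w₁ (evenTailPoly k c a (C A + T)) - u| ≤ 3 ∧
      |aeval w₂ (evenTailPoly k c a (C A + T)) - v| ≤ 3 ∧
      (∃ α ∈ Set.Icc (w₁ - r₁) (w₁ + r₁), aeval α (evenTailPoly k c a (C A + T)) = 0) ∧
      ∃ β ∈ Set.Icc (w₂ - r₂) (w₂ + r₂), aeval β (evenTailPoly k c a (C A + T)) = 0 := by
  have hA' : (0 : ℝ) ≤ 2 * A := by exact_mod_cast mul_nonneg zero_le_two hA
  obtain ⟨c, a, hc, hcu, hcv⟩ := exists_evenTailPoly_near k (C A + T)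
    (sub_ne_zero.1 (abs_pos.1 (hε.trans_le hw))) (by linarith) (by linarith) u v
  have h₁ : |aeval w₁ (evenTailPoly k c a (C A + T))| ≤ ε ^ 2 * (2 * A) / 4 * r₁ := by
    linarith [abs_sub_abs_le_abs_sub (aeval w₁ (evenTailPoly k c a (C A + T))) u]
  have h₂ : |aeval w₂ (evenTailPoly k c a (C A + T))| ≤ ε ^ 2 * (2 * A) / 4 * r₂ := by
    linarith [abs_sub_abs_le_abs_sub (aeval w₂ (evenTailPoly k c a (C A + T))) v]
  have h₁' := h₁.trans (slope_mul_radius_le hA' hε.le hε' hr₁')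
  have h₂' := h₂.trans (slope_mul_radius_le hA' hε.le hε' hr₂')
  obtain ⟨hcA, haA⟩ := abs_two_mul_coeff_le_of_abs_aeval_le hA hε hε' hw₁ hw₂ hw hT h₁' h₂'
  refine ⟨c, a, hc, hcA, haA, hcu, hcv, ?_⟩
  simp only [aeval_evenTailPoly_C_add] at h₁ h₂ h₁' h₂' ⊢
  exact ⟨exists_root_perturbedQuadratic hA' hε hε' hw₁ hw₂ hw hT hr₁ hr₁' h₁ h₂',
    exists_root_perturbedQuadratic hA' hε hε' hw₂ hw₁ (abs_sub_comm w₁ w₂ ▸ hw) hT hr₂ hr₂' h₂ h₁'⟩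

/-- The polynomial `∑ b j X ^ j` attached to a digit vector `b` with entries below `N`,
encoding the free choices of coefficients in the construction. -/
noncomputable def digitPoly {k N : ℕ} (b : Fin k → Fin N) : ℤ[X] :=
  ofFn k fun j ↦ ((b j : ℕ) : ℤ)

section DigitPoly

variable {k N : ℕ}

lemma degree_digitPoly_lt (b : Fin k → Fin N) : (digitPoly b).degree < k :=
  ofFn_degree_lt _

lemma digitPoly_injective : Function.Injective (digitPoly : (Fin k → Fin N) → ℤ[X]) :=
  fun b b' h ↦ funext fun j ↦ Fin.ext <| by exact_mod_cast congrFun (injective_ofFn k h) j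

lemma coeff_digitPoly_mem_Icc (b : Fin k → Fin N) (j : ℕ) :
    (digitPoly b).coeff j ∈ Set.Icc (0 : ℤ) N := by
  rcases lt_or_ge j k with hj | hj
  · rw [digitPoly, ofFn_coeff_eq_val_of_lt _ hj]
    exact ⟨by positivity, by exact_mod_cast (b ⟨j, hj⟩).2.le⟩
  · rw [digitPoly, ofFn_coeff_eq_zero_of_ge _ hj]
    exact ⟨le_rfl, by positivity⟩

lemma abs_coeff_C_add_digitPoly_le {A : ℤ} (hA : 0 ≤ A) (b : Fin k → Fin N) (j : ℕ) :
    |(C A + digitPoly b).coeff j| ≤ A + N := by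
  have hC : |(C A : ℤ[X]).coeff j| ≤ A := by
    rw [coeff_C]
    split_ifs
    · exact (abs_of_nonneg hA).le
    · simpa
  obtain ⟨hb₀, hbN⟩ := coeff_digitPoly_mem_Icc b j
  rw [coeff_add]
  exact (abs_add_le _ _).trans (add_le_add hC ((abs_of_nonneg hb₀).trans_le hbN))

lemma degree_C_add_digitPoly_lt (hk : 0 < k) (A : ℤ) (b : Fin k → Fin N) :
    (C A + digitPoly b).degree < k :=
  (degree_add_le _ _).trans_lt <|
    max_lt (degree_C_le.trans_lt (by exact_mod_cast hk)) (degree_digitPoly_lt b)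

end DigitPoly

lemma disjoint_Icc_of_lt_abs_sub {w₁ w₂ r₁ r₂ : ℝ} (h : r₁ + r₂ < |w₁ - w₂|) :
    Disjoint (Set.Icc (w₁ - r₁) (w₁ + r₁)) (Set.Icc (w₂ - r₂) (w₂ + r₂)) := by
  rw [← Real.closedBall_eq_Icc, ← Real.closedBall_eq_Icc]
  exact Metric.closedBall_disjoint_closedBall h

lemma abs_seven_mul_add_three_le {m : ℝ} {M : ℕ} (hM : 7 * M + 3 ≤ m) (i : Fin M) :
    |(7 * (i : ℕ) : ℝ)| + 3 ≤ m := by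
  have hiM : ((i : ℕ) : ℝ) ≤ M := by exact_mod_cast i.2.le
  rw [abs_of_nonneg (by positivity)]
  linarith

lemma exists_finset_isAlgIntPoint_card_eq_mul_pow {k N M₁ M₂ : ℕ} {A Q : ℤ} {ε w₁ w₂ r₁ r₂ : ℝ}
    (hk : 0 < k) (hN : 0 < N) (hNA : N ≤ A) (hAQ : 4 * A ≤ Q) (hε : 0 < ε) (hε' : ε ≤ 1)
    (hw₁ : |w₁| ≤ 1 / 2) (hw₂ : |w₂| ≤ 1 / 2) (hw : ε ≤ |w₁ - w₂|)
    (hr₁ : 0 ≤ r₁) (hr₁' : r₁ ≤ ε ^ 2 / 5) (hr₂ : 0 ≤ r₂) (hr₂' : r₂ ≤ ε ^ 2 / 5)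
    (hτ : ((k + 3 : ℕ) : ℝ) ^ 2 * (2 * N) ≤ ε ^ 2 * (2 * A) / 20)
    (hM₁ : 7 * M₁ + 3 ≤ ε ^ 2 * (2 * A) / 4 * r₁) (hM₂ : 7 * M₂ + 3 ≤ ε ^ 2 * (2 * A) / 4 * r₂) :
    ∃ S : Finset (ℝ × ℝ), (∀ q ∈ S, q.1 ∈ Set.Icc (w₁ - r₁) (w₁ + r₁) ∧
      q.2 ∈ Set.Icc (w₂ - r₂) (w₂ + r₂) ∧ IsAlgIntPoint (k + 2) Q q.1 q.2) ∧
      S.card = M₁ * (M₂ * N ^ k) := by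
  have hA : 0 ≤ A := by omega
  have hr : r₁ + r₂ < |w₁ - w₂| := by linarith [pow_le_of_le_one hε.le hε' two_ne_zero]
  have hT (b : Fin k → Fin N) := isC1BoundedBy_map_evenTailPoly (degree_digitPoly_lt b) hN
    (fun j ↦ abs_le.2 ⟨by linarith [(coeff_digitPoly_mem_Icc b j).1],
      (coeff_digitPoly_mem_Icc b j).2⟩) hτ
  choose c a hc hcA haA hu hv hroot₁ hroot₂ using
    fun i : Fin M₁ × Fin M₂ × (Fin k → Fin N) ↦
      exists_evenTailPoly_near_and_exists_roots hA hε hε' hw₁ hw₂ hw hr₁ hr₁' hr₂ hr₂' (hT i.2.2)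
        (abs_seven_mul_add_three_le hM₁ i.1) (abs_seven_mul_add_three_le hM₂ i.2.1)
  have hinj : Function.Injective fun i ↦ evenTailPoly k (c i) (a i) (C A + digitPoly i.2.2) :=
    fun i j hij ↦ by
      have hj₁ := hu j
      have hj₂ := hv j
      beta_reduce at hij
      rw [← hij] at hj₁ hj₂
      exact Prod.ext (Fin.ext (natCast_eq_of_abs_sub_le (hu i) hj₁))
        (Prod.ext (Fin.ext (natCast_eq_of_abs_sub_le (hv i) hj₂))
          (digitPoly_injective (add_left_cancel (evenTailPoly_inj_right hij))))
  have hdeg (i : Fin M₁ × Fin M₂ × (Fin k → Fin N)) := degree_C_add_digitPoly_lt hk A i.2.2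
  have hcoeff (i : Fin M₁ × Fin M₂ × (Fin k → Fin N)) (j : ℕ) :
      |2 * (C A + digitPoly i.2.2).coeff j| ≤ Q := by
    rw [abs_mul, abs_two]
    linarith [abs_coeff_C_add_digitPoly_le hA i.2.2 j]
  obtain ⟨S, hS, hcard⟩ := exists_finset_isAlgIntPoint_card_eq hinj (disjoint_Icc_of_lt_abs_sub hr)
    (fun i ↦ monic_evenTailPoly (hdeg i)) (fun i ↦ natDegree_evenTailPoly (hdeg i))
    (fun i ↦ irreducible_map_evenTailPoly (hdeg i) (hc i))
    (fun i ↦ abs_coeff_evenTailPoly_le (hdeg i) (by omega) ((hcA i).trans hAQ)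
      ((haA i).trans hAQ) (hcoeff i)) hroot₁ hroot₂
  refine ⟨S, hS, hcard.trans ?_⟩
  simp only [Fintype.card_prod, Fintype.card_fin, Fintype.card_pi, Finset.prod_const,
    Finset.card_univ]

end Construction

section Rectangles

/-- The fraction `ε ^ 4 / (800 (k + 3)²)` of the height within which the `k` free digits and, after
scaling by the side lengths, the two prescribed values of `evenTailPoly` may range. -/
noncomputable def boxScale (k : ℕ) (ε : ℝ) : ℝ :=
  ε ^ 4 / (800 * (k + 3) ^ 2)

section BoxScale

variable {k : ℕ} {ε : ℝ}

lemma boxScale_pos (hε : 0 < ε) : 0 < boxScale k ε := by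
  unfold boxScale
  positivity

lemma boxScale_mul_sq : boxScale k ε * (k + 3) ^ 2 = ε ^ 4 / 800 := by
  unfold boxScale
  field_simp

lemma boxScale_le : boxScale k ε ≤ ε ^ 4 / 800 := by
  have hk : (1 : ℝ) ≤ 800 * (k + 3) ^ 2 / 800 := by
    rw [mul_div_cancel_left₀ _ (by norm_num)]
    exact one_le_pow₀ (by linarith [k.cast_nonneg (α := ℝ)])
  exact div_le_div_of_nonneg_left (by positivity) (by norm_num) (by linarith)

lemma boxScale_le_one_div (hε : 0 ≤ ε) (hε' : ε ≤ 1) : boxScale k ε ≤ 1 / 800 :=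
  boxScale_le.trans (by linarith [pow_le_one₀ (n := 4) hε hε'])

lemma boxScale_mul_le (hε : 0 ≤ ε) (hε' : ε ≤ 1) {q : ℝ} (hq : 0 ≤ q) :
    boxScale k ε * q ≤ q / 800 :=
  (mul_le_mul_of_nonneg_right (boxScale_le_one_div hε hε') hq).trans_eq (one_div_mul_eq_div _ _)

variable {A q L : ℝ}

lemma sq_mul_floor_boxScale_le (hε : 0 < ε) (hε' : ε ≤ 1) (hq : 0 ≤ q) (hqA : q ≤ 8 * A) :
    ((k + 3 : ℕ) : ℝ) ^ 2 * (2 * ⌊boxScale k ε * q⌋₊) ≤ ε ^ 2 * (2 * A) / 20 := by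
  have hfloor := Nat.floor_le (mul_nonneg (boxScale_pos (k := k) hε).le hq)
  have hε_sq : ε ^ 2 ≤ 1 := pow_le_one₀ hε.le hε'
  calc ((k + 3 : ℕ) : ℝ) ^ 2 * (2 * ⌊boxScale k ε * q⌋₊)
      ≤ ((k + 3 : ℕ) : ℝ) ^ 2 * (2 * (boxScale k ε * q)) := by gcongr
    _ = 2 * (boxScale k ε * (k + 3) ^ 2) * q := by push_cast; ring
    _ = ε ^ 2 * (ε ^ 2 * q) / 400 := by rw [boxScale_mul_sq]; ring
    _ ≤ ε ^ 2 * (1 * (8 * A)) / 400 := by gcongr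
    _ = ε ^ 2 * (2 * A) / 100 := by ring
    _ ≤ ε ^ 2 * (2 * A) / 20 :=
        div_le_div_of_nonneg_left (mul_nonneg (sq_nonneg ε) (by linarith)) (by norm_num)
          (by norm_num)

lemma seven_mul_floor_boxScale_add_three_le (hε : 0 < ε) (hL : 0 ≤ L) (hqA : q ≤ 8 * A)
    (h : 1 ≤ boxScale k ε * (q * L)) :
    7 * (⌊boxScale k ε * (q * L)⌋₊ : ℝ) + 3 ≤ ε ^ 2 * (2 * A) / 4 * (ε ^ 2 * L / 5) := by
  have hfloor := Nat.floor_le (zero_le_one.trans h)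
  have hη := boxScale_le (k := k) (ε := ε)
  have hqL : 0 ≤ q * L := (pos_of_mul_pos_right (one_pos.trans_le h) (boxScale_pos hε).le).le
  calc 7 * (⌊boxScale k ε * (q * L)⌋₊ : ℝ) + 3 ≤ 10 * (boxScale k ε * (q * L)) := by linarith
    _ ≤ 10 * (ε ^ 4 / 800 * (q * L)) := by gcongr
    _ ≤ 10 * (ε ^ 4 / 800 * (8 * A * L)) := by gcongr
    _ = ε ^ 2 * (2 * A) / 4 * (ε ^ 2 * L / 5) := by ring

end BoxScale

variable {k Q : ℕ} {ε w₁ w₂ L₁ L₂ : ℝ}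

lemma pow_mul_le_floor_mul {η x y z : ℝ} (hx : 1 ≤ η * x) (hy : 1 ≤ η * y) (hz : 1 ≤ η * z) :
    (η / 2) ^ (k + 2) * (x * y * z ^ k) ≤ (⌊η * x⌋₊ * (⌊η * y⌋₊ * ⌊η * z⌋₊ ^ k) : ℕ) := by
  have half_le {t : ℝ} (ht : 1 ≤ t) : t / 2 ≤ ⌊t⌋₊ := (Nat.div_two_lt_floor ht).le
  have hy₀ : 0 ≤ η * y / 2 := by linarith
  have hz₀ : 0 ≤ η * z / 2 := by linarith
  calc (η / 2) ^ (k + 2) * (x * y * z ^ k)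
      = η * x / 2 * (η * y / 2 * (η * z / 2) ^ k) := by ring
    _ ≤ ⌊η * x⌋₊ * (⌊η * y⌋₊ * ⌊η * z⌋₊ ^ k) :=
        mul_le_mul (half_le hx)
          (mul_le_mul (half_le hy) (pow_le_pow_left₀ hz₀ (half_le hz) k) (pow_nonneg hz₀ k)
            (Nat.cast_nonneg _))
          (mul_nonneg hy₀ (pow_nonneg hz₀ k)) (Nat.cast_nonneg _)
    _ = _ := by push_cast; rfl

lemma exists_finset_isAlgIntPoint_of_centers (hk : 0 < k) (hε : 0 < ε) (hε' : ε ≤ 1)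
    (hw₁ : |w₁| ≤ 1 / 2) (hw₂ : |w₂| ≤ 1 / 2) (hw : ε ≤ |w₁ - w₂|)
    (hL₁ : 0 ≤ L₁) (hL₁' : L₁ ≤ 1) (hL₂ : 0 ≤ L₂) (hL₂' : L₂ ≤ 1)
    (h₁ : 1 ≤ boxScale k ε * (Q * L₁)) (h₂ : 1 ≤ boxScale k ε * (Q * L₂)) :
    ∃ S : Finset (ℝ × ℝ), (∀ q ∈ S, q.1 ∈ Set.Icc (w₁ - L₁ / 2) (w₁ + L₁ / 2) ∧
      q.2 ∈ Set.Icc (w₂ - L₂ / 2) (w₂ + L₂ / 2) ∧ IsAlgIntPoint (k + 2) Q q.1 q.2) ∧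
      (boxScale k ε / 2) ^ (k + 2) * (Q ^ (k + 2) * (L₁ * L₂)) ≤ S.card := by
  set η := boxScale k ε
  have hη : 0 < η := boxScale_pos hε
  have hQ : 1 ≤ η * Q := h₁.trans (by gcongr; exact mul_le_of_le_one_right Q.cast_nonneg hL₁')
  have hηQ : η * Q ≤ Q / 800 := boxScale_mul_le hε.le hε' Q.cast_nonneg
  have hQ' : 800 ≤ Q := by exact_mod_cast (by linarith : (800 : ℝ) ≤ Q)
  have hε_sq : ε ^ 2 ≤ 1 := pow_le_one₀ hε.le hε'
  obtain ⟨A, hAQ, hQA⟩ : ∃ A : ℤ, 4 * A ≤ Q ∧ (Q : ℤ) ≤ 8 * A := ⟨Q / 4, by omega, by omega⟩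
  have hQA' : (Q : ℝ) ≤ 8 * A := by exact_mod_cast hQA
  have hNA : (⌊η * Q⌋₊ : ℤ) ≤ A := by
    exact_mod_cast (by linarith [Nat.floor_le (zero_le_one.trans hQ)] : (⌊η * Q⌋₊ : ℝ) ≤ A)
  have hr {L : ℝ} (hL : 0 ≤ L) : ε ^ 2 * L / 5 ≤ L / 2 := by
    linarith [mul_le_of_le_one_left hL hε_sq]
  have hr' {L : ℝ} (hL : L ≤ 1) : ε ^ 2 * L / 5 ≤ ε ^ 2 / 5 := by
    linarith [mul_le_of_le_one_right (sq_nonneg ε) hL]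
  obtain ⟨S, hS, hcard⟩ := exists_finset_isAlgIntPoint_card_eq_mul_pow hk (Nat.floor_pos.2 hQ) hNA
    hAQ hε hε' hw₁ hw₂ hw (by positivity) (hr' hL₁') (by positivity) (hr' hL₂')
    (sq_mul_floor_boxScale_le hε hε' Q.cast_nonneg hQA')
    (seven_mul_floor_boxScale_add_three_le hε hL₁ hQA' h₁)
    (seven_mul_floor_boxScale_add_three_le hε hL₂ hQA' h₂)
  refine ⟨S, fun q hq ↦ ?_, ?_⟩
  · obtain ⟨hq₁, hq₂, hq⟩ := hS q hq
    exact ⟨Set.Icc_subset_Icc (by linarith [hr hL₁]) (by linarith [hr hL₁]) hq₁,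
      Set.Icc_subset_Icc (by linarith [hr hL₂]) (by linarith [hr hL₂]) hq₂, hq⟩
  · rw [hcard, show (Q : ℝ) ^ (k + 2) * (L₁ * L₂) = Q * L₁ * (Q * L₂) * Q ^ k by ring]
    exact pow_mul_le_floor_mul h₁ h₂ hQ

lemma exists_finset_isAlgIntPoint_of_separated {n : ℕ} (hn : 3 ≤ n) (hε : 0 < ε) :
    ∃ c > (0 : ℝ), ∃ K : ℝ, ∀ Q : ℕ, ∀ a₁ b₁ a₂ b₂ : ℝ,
      Set.Icc a₁ b₁ ⊆ Set.Icc (-(1 / 2)) (1 / 2) → Set.Icc a₂ b₂ ⊆ Set.Icc (-(1 / 2)) (1 / 2) →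
      a₁ ≤ b₁ → a₂ ≤ b₂ → K ≤ Q * (b₁ - a₁) → K ≤ Q * (b₂ - a₂) →
      (∀ x ∈ Set.Icc a₁ b₁, ∀ y ∈ Set.Icc a₂ b₂, ε ≤ |x - y|) →
      ∃ S : Finset (ℝ × ℝ), (∀ q ∈ S, q.1 ∈ Set.Icc a₁ b₁ ∧ q.2 ∈ Set.Icc a₂ b₂ ∧
        IsAlgIntPoint n Q q.1 q.2) ∧ c * (Q ^ n * ((b₁ - a₁) * (b₂ - a₂))) ≤ S.card := by
  obtain ⟨k, rfl, hk⟩ : ∃ k, n = k + 2 ∧ 0 < k := ⟨n - 2, by omega, by omega⟩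
  have hε₁ : 0 < min ε 1 := lt_min hε one_pos
  have hη : 0 < boxScale k (min ε 1) := boxScale_pos hε₁
  refine ⟨(boxScale k (min ε 1) / 2) ^ (k + 2), by positivity, 1 / boxScale k (min ε 1),
    fun Q a₁ b₁ a₂ b₂ hI₁ hI₂ hab₁ hab₂ hQ₁ hQ₂ hsep ↦ ?_⟩
  rw [div_le_iff₀' hη] at hQ₁ hQ₂
  have hends₁ := (Set.Icc_subset_Icc_iff hab₁).1 hI₁
  have hends₂ := (Set.Icc_subset_Icc_iff hab₂).1 hI₂
  have hcenter : min ε 1 ≤ |(a₁ + b₁) / 2 - (a₂ + b₂) / 2| :=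
    (min_le_left _ _).trans (hsep _ ⟨by linarith, by linarith⟩ _ ⟨by linarith, by linarith⟩)
  have key := exists_finset_isAlgIntPoint_of_centers hk hε₁ (min_le_right _ _)
    (abs_le.2 ⟨by linarith, by linarith⟩) (abs_le.2 ⟨by linarith, by linarith⟩) hcenter
    (sub_nonneg.2 hab₁) (by linarith) (sub_nonneg.2 hab₂) (by linarith) hQ₁ hQ₂
  have hleft (a b : ℝ) : (a + b) / 2 - (b - a) / 2 = a := by ring
  have hright (a b : ℝ) : (a + b) / 2 + (b - a) / 2 = b := by ring
  simpa only [hleft, hright] using key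

end Rectangles

lemma eventually_le_natCast_mul_rpow_neg {κ : ℝ} (hκ : κ < 1) (K : ℝ) :
    ∀ᶠ Q : ℕ in Filter.atTop, K ≤ Q * (Q : ℝ) ^ (-κ) := by
  have hlim := (tendsto_rpow_atTop (sub_pos.2 hκ)).comp tendsto_natCast_atTop_atTop
  filter_upwards [hlim.eventually_ge_atTop K] with Q hQ
  rwa [← Real.rpow_one_add' Q.cast_nonneg (by linarith), ← sub_eq_add_neg]

theorem algebraic_integer_points_in_rectangles_general {n : ℕ} (hn : 3 ≤ n) {κ₁ κ₂ : ℝ}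
    (hκ₁ : κ₁ < 1) (hκ₂ : κ₂ < 1) {ε : ℝ} (hε : 0 < ε) :
    ∃ c > (0 : ℝ), ∃ Q₀ : ℕ, ∀ Q : ℕ, Q₀ < Q → ∀ a₁ b₁ a₂ b₂ : ℝ,
      Set.Icc a₁ b₁ ⊆ Set.Icc (-(1 / 2)) (1 / 2) → Set.Icc a₂ b₂ ⊆ Set.Icc (-(1 / 2)) (1 / 2) →
      b₁ - a₁ = (Q : ℝ) ^ (-κ₁) → b₂ - a₂ = (Q : ℝ) ^ (-κ₂) →
      (∀ x ∈ Set.Icc a₁ b₁, ∀ y ∈ Set.Icc a₂ b₂, ε < |x - y|) →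
      ∃ S : Finset (ℝ × ℝ), (∀ q ∈ S, q.1 ∈ Set.Icc a₁ b₁ ∧ q.2 ∈ Set.Icc a₂ b₂ ∧
        IsAlgIntPoint n Q q.1 q.2) ∧ c * (Q : ℝ) ^ ((n : ℝ) - κ₁ - κ₂) ≤ S.card := by
  obtain ⟨c, hc, K, hK⟩ := exists_finset_isAlgIntPoint_of_separated hn hε
  obtain ⟨Q₀, hQ₀⟩ := Filter.eventually_atTop.1 <|
    (eventually_le_natCast_mul_rpow_neg hκ₁ K).and (eventually_le_natCast_mul_rpow_neg hκ₂ K)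
  refine ⟨c, hc, Q₀, fun Q hQ a₁ b₁ a₂ b₂ hI₁ hI₂ hL₁ hL₂ hsep ↦ ?_⟩
  have hQ_pos : (0 : ℝ) < Q := by exact_mod_cast (Nat.zero_le Q₀).trans_lt hQ
  have hab₁ : a₁ ≤ b₁ := sub_nonneg.1 (hL₁ ▸ by positivity)
  have hab₂ : a₂ ≤ b₂ := sub_nonneg.1 (hL₂ ▸ by positivity)
  obtain ⟨S, hS, hcard⟩ := hK Q a₁ b₁ a₂ b₂ hI₁ hI₂ hab₁ hab₂ (hL₁ ▸ (hQ₀ Q hQ.le).1)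
    (hL₂ ▸ (hQ₀ Q hQ.le).2) fun x hx y hy ↦ (hsep x hx y hy).le
  refine ⟨S, hS, ?_⟩
  rwa [hL₁, hL₂, ← Real.rpow_natCast, ← Real.rpow_add hQ_pos, ← Real.rpow_add hQ_pos, ← add_assoc,
    ← sub_eq_add_neg, ← sub_eq_add_neg] at hcard

/-- For `n ≥ 4`, `0 < κ₁, κ₂ < 1/2` and `ε > 0`, there are `c₇ > 0` and `Q₀` such that
for every integer `Q > Q₀`, every rectangle `E = I₁ × I₂ ⊆ [-1/2, 1/2]²` with
`|I₁| = Q^{-κ₁}`, `|I₂| = Q^{-κ₂}`, staying away from the diagonal by `ε`, contains at least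
`c₇·Q^{n-κ₁-κ₂}` algebraic integer points of degree `n` and height at most `Q`. -/
theorem algebraic_integer_points_in_rectangles (n : ℕ) (hn : 4 ≤ n)
    (κ₁ κ₂ : ℝ) (hκ₁ : 0 < κ₁) (hκ₁' : κ₁ < 1/2) (hκ₂ : 0 < κ₂) (hκ₂' : κ₂ < 1/2)
    (ε : ℝ) (hε : 0 < ε) :
    ∃ c₇ > (0 : ℝ), ∃ Q₀ : ℕ, ∀ Q : ℕ, Q₀ < Q →
      ∀ a₁ b₁ a₂ b₂ : ℝ,
        Set.Icc a₁ b₁ ⊆ Set.Icc (-(1/2) : ℝ) (1/2) →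
        Set.Icc a₂ b₂ ⊆ Set.Icc (-(1/2) : ℝ) (1/2) →
        b₁ - a₁ = (Q : ℝ) ^ (-κ₁) →
        b₂ - a₂ = (Q : ℝ) ^ (-κ₂) →
        (∀ x ∈ Set.Icc a₁ b₁, ∀ y ∈ Set.Icc a₂ b₂, ε < |x - y|) →
        ∃ S : Finset (ℝ × ℝ),
          (∀ q ∈ S, q.1 ∈ Set.Icc a₁ b₁ ∧ q.2 ∈ Set.Icc a₂ b₂ ∧
            IsAlgIntPoint n (Q : ℤ) q.1 q.2) ∧
          c₇ * (Q : ℝ) ^ ((n : ℝ) - κ₁ - κ₂) ≤ (S.card : ℝ) := by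
  exact algebraic_integer_points_in_rectangles_general (by omega) (by linarith) (by linarith) hε
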